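/- Fix m ∈ (−1,1), suppose Assumption 1 holds, and let a ∈ (0,ς). Let (A_n)_{n∈ℕ} be h-measurable random variables with A_n(h)/n → a P_h-almost surely. Then P_h-almost surely: (i) Λ_n(h, A_n(h)) → λ̂(a), where λ̂(a) is the unique λ ≥ 0 with G'(λ) = a; and (ii) M*_n(h, A_n(h))/n → G*(a). -/

import Mathlib

open MeasureTheory ProbabilityTheory Real Filter Set
open scoped ENNReal Topology BigOperators

noncomputable section

/-- Assumption 1 of the paper, phrased for the law `μ` of `h₁`. -/
structure Assumption1 (μ : Measure ℝ) : Prop where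
  isProb : IsProbabilityMeasure μ
  acPart : ¬ μ.MutuallySingular (volume : Measure ℝ)
  smallBall : ∃ ε > (0:ℝ), ∃ p₁ > (0:ℝ), ∀ t ∈ Set.Ico (0:ℝ) ε,
    (μ {x : ℝ | |x| < t}).toReal ≤ p₁ * t
  densityLB : ∃ c d p₂ : ℝ, c < d ∧ 0 < p₂ ∧
    ∀ s : Set ℝ, s ⊆ Set.Icc c d → MeasurableSet s →
      ENNReal.ofReal p₂ * volume s ≤ μ s
  intAbs : Integrable (fun x : ℝ => |x|) μ
  intSq : Integrable (fun x : ℝ => x ^ 2) μ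
  intCube : Integrable (fun x : ℝ => |x| ^ 3) μ

/-- `g(λ) = log(((1+m)/2)e^{λ(1−m)} + ((1−m)/2)e^{−λ(1+m)})`. -/
def gfun (m lam : ℝ) : ℝ :=
  Real.log ((1 + m) / 2 * Real.exp (lam * (1 - m)) + (1 - m) / 2 * Real.exp (-(lam * (1 + m))))

/-- `M_n(h,λ) = Σ_{i=1}^n g(λ h_i)`. -/
def Mn (m : ℝ) (n : ℕ) (hs : ℕ → ℝ) (lam : ℝ) : ℝ :=
  ∑ i ∈ Finset.range n, gfun m (lam * hs i)

/-- `M*_n(h,a) = sup_{λ∈ℝ}(λa − M_n(h,λ))`. -/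
def MstarN (m : ℝ) (n : ℕ) (hs : ℕ → ℝ) (a : ℝ) : ℝ :=
  ⨆ lam : ℝ, (lam * a - Mn m n hs lam)

/-- `Σ_n(h) = −m Σ_{i=1}^n h_i + Σ_{i=1}^n |h_i|`. -/
def SigmaN (m : ℝ) (n : ℕ) (hs : ℕ → ℝ) : ℝ :=
  -m * ∑ i ∈ Finset.range n, hs i + ∑ i ∈ Finset.range n, |hs i|

/-- `G(λ) = E[g(λ h₁)]`. -/
def Gf (μ : Measure ℝ) (m lam : ℝ) : ℝ := ∫ x, gfun m (lam * x) ∂μ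

/-- `G*(a) = sup_{λ∈ℝ}(λa − G(λ))`. -/
def Gstar (μ : Measure ℝ) (m a : ℝ) : ℝ := ⨆ lam : ℝ, (lam * a - Gf μ m lam)

/-- `ς = −m ψ₁ + ψ₃`. -/
def sigmaBar (μ : Measure ℝ) (m : ℝ) : ℝ := -m * ∫ x, x ∂μ + ∫ x, |x| ∂μ

/-- derivative of `gfun`. -/
def gder (m x : ℝ) : ℝ := (1 - m) - (1 - m) / ((1 + m) / 2 * Real.exp (2 * x) + (1 - m) / 2)

lemma gder_den_pos {m : ℝ} (hm : m ∈ Set.Ioo (-1 : ℝ) 1) (x : ℝ) :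
    0 < (1 + m) / 2 * Real.exp (2 * x) + (1 - m) / 2 := by
  have h1 : 0 < 1 + m := by linarith [hm.1]
  have h2 : 0 < 1 - m := by linarith [hm.2]
  positivity

lemma gfun_hasDerivAt {m : ℝ} (hm : m ∈ Set.Ioo (-1 : ℝ) 1) (x : ℝ) :
    HasDerivAt (gfun m) (gder m x) x := by
  have h1 : 0 < 1 + m := by linarith [hm.1]
  have h2 : 0 < 1 - m := by linarith [hm.2]
  have e1 : HasDerivAt (fun x : ℝ => Real.exp (x * (1 - m)))
      (Real.exp (x * (1 - m)) * (1 * (1 - m))) x := ((hasDerivAt_id x).mul_const (1 - m)).exp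
  have e2 : HasDerivAt (fun x : ℝ => Real.exp (-(x * (1 + m))))
      (Real.exp (-(x * (1 + m))) * (-(1 * (1 + m)))) x :=
    (((hasDerivAt_id x).mul_const (1 + m)).neg).exp
  have hpos : 0 < (1 + m) / 2 * Real.exp (x * (1 - m))
      + (1 - m) / 2 * Real.exp (-(x * (1 + m))) := by positivity
  have h := ((e1.const_mul ((1 + m) / 2)).add (e2.const_mul ((1 - m) / 2))).log hpos.ne'
  refine h.congr_deriv ?_
  have hd := gder_den_pos hm x
  have hx : Real.exp (x * (1 - m)) = Real.exp (2 * x) * Real.exp (-(x * (1 + m))) := by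
    rw [← Real.exp_add]; congr 1; ring
  have hE := Real.exp_pos (-(x * (1 + m)))
  unfold gder
  simp only [Pi.add_apply]
  rw [hx] at hpos ⊢
  rw [div_eq_iff hpos.ne']
  have hd' := hd.ne'
  field_simp
  ring

lemma gder_strictMono {m : ℝ} (hm : m ∈ Set.Ioo (-1 : ℝ) 1) : StrictMono (gder m) := by
  intro x y hxy
  have h1 : 0 < 1 + m := by linarith [hm.1]
  have h2 : 0 < 1 - m := by linarith [hm.2]
  have := gder_den_pos hm x
  unfold gder
  gcongr

lemma gder_abs_le {m : ℝ} (hm : m ∈ Set.Ioo (-1 : ℝ) 1) (x : ℝ) : |gder m x| ≤ 2 := by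
  have h1 : 0 < 1 + m := by linarith [hm.1]
  have h2 : 0 < 1 - m := by linarith [hm.2]
  have hd := gder_den_pos hm x
  have hA : 0 ≤ (1 - m) / ((1 + m) / 2 * Real.exp (2 * x) + (1 - m) / 2) := by positivity
  have hB : (1 - m) / ((1 + m) / 2 * Real.exp (2 * x) + (1 - m) / 2) ≤ 2 := by
    rw [div_le_iff₀ hd]
    have := mul_pos h1 (Real.exp_pos (2 * x))
    linarith
  unfold gder
  rw [abs_le]
  constructor <;> linarith [hm.1, hm.2]

lemma gder_measurable (m : ℝ) : Measurable (gder m) := by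
  unfold gder; fun_prop

lemma gfun_measurable (m : ℝ) : Measurable (gfun m) := by
  unfold gfun; fun_prop

lemma gfun_lip {m : ℝ} (hm : m ∈ Set.Ioo (-1 : ℝ) 1) (x y : ℝ) :
    |gfun m y - gfun m x| ≤ 2 * |y - x| := by
  have := (convex_univ (𝕜 := ℝ) (E := ℝ)).norm_image_sub_le_of_norm_hasDerivWithin_le
    (f := gfun m) (f' := gder m) (C := 2)
    (fun z _ => (gfun_hasDerivAt hm z).hasDerivWithinAt)
    (fun z _ => gder_abs_le hm z) (mem_univ x) (mem_univ y)
  simpa using this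

lemma gfun_tangent {m : ℝ} (hm : m ∈ Set.Ioo (-1 : ℝ) 1) (x y : ℝ) :
    gfun m x + gder m x * (y - x) ≤ gfun m y := by
  have hder : deriv (gfun m) = gder m := funext fun z => (gfun_hasDerivAt hm z).deriv
  have hc : ConvexOn ℝ univ (gfun m) :=
    Monotone.convexOn_univ_of_deriv (fun z => (gfun_hasDerivAt hm z).differentiableAt)
      (hder ▸ (gder_strictMono hm).monotone)
  rcases lt_trichotomy x y with h | h | h
  · have := hc.le_slope_of_hasDerivAt (mem_univ x) (mem_univ y) h (gfun_hasDerivAt hm x)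
    rw [slope_def_field, le_div_iff₀ (by linarith)] at this
    linarith
  · subst h; simp
  · have := hc.slope_le_of_hasDerivAt (mem_univ y) (mem_univ x) h (gfun_hasDerivAt hm x)
    rw [slope_def_field, div_le_iff₀ (by linarith)] at this
    linarith

lemma gfun_zero (m : ℝ) : gfun m 0 = 0 := by
  unfold gfun
  simp only [zero_mul, neg_zero, Real.exp_zero, mul_one]
  rw [show (1 + m) / 2 + (1 - m) / 2 = 1 by ring, Real.log_one]

lemma gfun_abs_le {m : ℝ} (hm : m ∈ Set.Ioo (-1 : ℝ) 1) (x : ℝ) : |gfun m x| ≤ 2 * |x| := by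
  simpa [gfun_zero] using gfun_lip hm 0 x

lemma gfun_comp_hasDerivAt {m : ℝ} (hm : m ∈ Set.Ioo (-1 : ℝ) 1) (x l : ℝ) :
    HasDerivAt (fun l => gfun m (l * x)) (gder m (l * x) * x) l := by
  have h1 : HasDerivAt (fun l : ℝ => l * x) x l := by
    simpa using (hasDerivAt_id l).mul_const x
  exact HasDerivAt.comp (h₂ := gfun m) (h := fun l : ℝ => l * x) l
    (gfun_hasDerivAt hm (l * x)) h1

lemma mono_mul {m : ℝ} (hm : m ∈ Set.Ioo (-1 : ℝ) 1) (x : ℝ) {l k : ℝ} (h : l ≤ k) :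
    gder m (l * x) * x ≤ gder m (k * x) * x := by
  rcases le_total 0 x with hx | hx
  · exact mul_le_mul_of_nonneg_right
      ((gder_strictMono hm).monotone (mul_le_mul_of_nonneg_right h hx)) hx
  · exact mul_le_mul_of_nonpos_right
      ((gder_strictMono hm).monotone (mul_le_mul_of_nonpos_right h hx)) hx

lemma strictMono_mul {m : ℝ} (hm : m ∈ Set.Ioo (-1 : ℝ) 1) {x : ℝ} (hx : x ≠ 0)
    {l k : ℝ} (h : l < k) : gder m (l * x) * x < gder m (k * x) * x := by
  rcases lt_or_gt_of_ne hx with hx | hx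
  · exact mul_lt_mul_of_neg_right
      (gder_strictMono hm (mul_lt_mul_of_neg_right h hx)) hx
  · exact mul_lt_mul_of_pos_right
      (gder_strictMono hm (mul_lt_mul_of_pos_right h hx)) hx

lemma abs_mul_le {m : ℝ} (hm : m ∈ Set.Ioo (-1 : ℝ) 1) (l x : ℝ) :
    |gder m (l * x) * x| ≤ 2 * |x| := by
  rw [abs_mul]
  exact mul_le_mul_of_nonneg_right (gder_abs_le hm _) (abs_nonneg _)

lemma Mn_hasDerivAt {m : ℝ} (hm : m ∈ Set.Ioo (-1 : ℝ) 1) (n : ℕ) (hs : ℕ → ℝ) (l : ℝ) :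
    HasDerivAt (Mn m n hs) (∑ i ∈ Finset.range n, gder m (l * hs i) * hs i) l :=
  HasDerivAt.fun_sum fun i _ => gfun_comp_hasDerivAt hm (hs i) l

lemma Mn_lip {m : ℝ} (hm : m ∈ Set.Ioo (-1 : ℝ) 1) (n : ℕ) (hs : ℕ → ℝ) (l k : ℝ) :
    |Mn m n hs k - Mn m n hs l| ≤ 2 * (∑ i ∈ Finset.range n, |hs i|) * |k - l| := by
  unfold Mn
  rw [← Finset.sum_sub_distrib, Finset.mul_sum, Finset.sum_mul]
  refine (Finset.abs_sum_le_sum_abs _ _).trans (Finset.sum_le_sum fun i _ => ?_)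
  refine (gfun_lip hm _ _).trans (le_of_eq ?_)
  rw [← sub_mul, abs_mul]; ring

lemma Mn_tangent {m : ℝ} (hm : m ∈ Set.Ioo (-1 : ℝ) 1) (n : ℕ) (hs : ℕ → ℝ) (l k : ℝ) :
    Mn m n hs l + (∑ i ∈ Finset.range n, gder m (l * hs i) * hs i) * (k - l)
      ≤ Mn m n hs k := by
  unfold Mn
  rw [Finset.sum_mul, ← Finset.sum_add_distrib]
  refine Finset.sum_le_sum fun i _ => ?_
  refine le_trans (le_of_eq ?_) (gfun_tangent hm (l * hs i) (k * hs i))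
  ring

lemma MstarN_eq {m : ℝ} (hm : m ∈ Set.Ioo (-1 : ℝ) 1) (n : ℕ) (hs : ℕ → ℝ) (l b : ℝ)
    (h : ∑ i ∈ Finset.range n, gder m (l * hs i) * hs i = b) :
    MstarN m n hs b = l * b - Mn m n hs l := by
  have hb : ∀ k, k * b - Mn m n hs k ≤ l * b - Mn m n hs l := fun k => by
    have := Mn_tangent hm n hs l k
    rw [h] at this; linarith
  exact le_antisymm (ciSup_le hb)
    (le_ciSup (f := fun k => k * b - Mn m n hs k) ⟨_, by rintro _ ⟨k, rfl⟩; exact hb k⟩ l)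

lemma gfun_integrable {m : ℝ} (hm : m ∈ Set.Ioo (-1 : ℝ) 1) {μ : Measure ℝ}
    (hμ : Integrable (fun x : ℝ => |x|) μ) (l : ℝ) :
    Integrable (fun x => gfun m (l * x)) μ := by
  refine Integrable.mono' (hμ.const_mul (2 * |l|))
    ((gfun_measurable m).comp (measurable_const_mul l)).aestronglyMeasurable ?_
  refine Eventually.of_forall fun x => (gfun_abs_le hm _).trans (le_of_eq ?_)
  rw [abs_mul]; ring

lemma gder_integrable {m : ℝ} (hm : m ∈ Set.Ioo (-1 : ℝ) 1) {μ : Measure ℝ}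
    (hμ : Integrable (fun x : ℝ => |x|) μ) (l : ℝ) :
    Integrable (fun x => gder m (l * x) * x) μ := by
  refine Integrable.mono' (hμ.const_mul 2)
    (((gder_measurable m).comp (measurable_const_mul l)).mul
      measurable_id).aestronglyMeasurable ?_
  exact Eventually.of_forall fun x => abs_mul_le hm _ _

lemma Gf_hasDerivAt {m : ℝ} (hm : m ∈ Set.Ioo (-1 : ℝ) 1) {μ : Measure ℝ}
    (hμ : Integrable (fun x : ℝ => |x|) μ) (l : ℝ) :
    HasDerivAt (Gf μ m) (∫ x, gder m (l * x) * x ∂μ) l :=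
  (hasDerivAt_integral_of_dominated_loc_of_deriv_le (F := fun l x => gfun m (l * x))
    (F' := fun l x => gder m (l * x) * x) (bound := fun x => 2 * |x|) (s := univ) univ_mem
    (Eventually.of_forall fun k => (gfun_integrable hm hμ k).aestronglyMeasurable)
    (gfun_integrable hm hμ l) (gder_integrable hm hμ l).aestronglyMeasurable
    (Eventually.of_forall fun x k _ => abs_mul_le hm k x) (hμ.const_mul 2)
    (Eventually.of_forall fun x k _ => gfun_comp_hasDerivAt hm x k)).2

lemma Gstar_eq {m : ℝ} (hm : m ∈ Set.Ioo (-1 : ℝ) 1) {μ : Measure ℝ}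
    (hμ : Integrable (fun x : ℝ => |x|) μ) (l b : ℝ)
    (h : ∫ x, gder m (l * x) * x ∂μ = b) :
    Gstar μ m b = l * b - Gf μ m l := by
  have hb : ∀ k, k * b - Gf μ m k ≤ l * b - Gf μ m l := fun k => by
    have h1 : ∫ x, (gfun m (l * x) + gder m (l * x) * x * (k - l)) ∂μ ≤ Gf μ m k := by
      refine integral_mono ((gfun_integrable hm hμ l).add
        ((gder_integrable hm hμ l).mul_const _)) (gfun_integrable hm hμ k) fun x => ?_
      refine le_trans (le_of_eq ?_) (gfun_tangent hm (l * x) (k * x))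
      ring
    rw [integral_add (gfun_integrable hm hμ l) ((gder_integrable hm hμ l).mul_const _),
      integral_mul_const, h] at h1
    change Gf μ m l + _ ≤ _ at h1
    linarith
  exact le_antisymm (ciSup_le hb)
    (le_ciSup (f := fun k => k * b - Gf μ m k) ⟨_, by rintro _ ⟨k, rfl⟩; exact hb k⟩ l)

lemma D_strictMono {m : ℝ} (hm : m ∈ Set.Ioo (-1 : ℝ) 1) {μ : Measure ℝ}
    (hμ : Integrable (fun x : ℝ => |x|) μ) (hs : 0 < sigmaBar μ m) {l k : ℝ} (hlk : l < k) :
    ∫ x, gder m (l * x) * x ∂μ < ∫ x, gder m (k * x) * x ∂μ := by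
  rw [← sub_pos, ← integral_sub (gder_integrable hm hμ k) (gder_integrable hm hμ l)]
  rw [integral_pos_iff_support_of_nonneg
    (fun x => sub_nonneg.2 (mono_mul hm x hlk.le))
    ((gder_integrable hm hμ k).sub (gder_integrable hm hμ l))]
  have hsub : {x : ℝ | ¬ (x = 0)} ⊆
      Function.support fun x => gder m (k * x) * x - gder m (l * x) * x := fun x hx =>
    (sub_pos.2 (strictMono_mul hm hx hlk)).ne'
  refine lt_of_lt_of_le (pos_iff_ne_zero.2 fun h0 => ?_) (measure_mono hsub)
  have h0' : ∀ᵐ x ∂μ, x = 0 := h0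
  have i1 : ∫ x, x ∂μ = 0 := integral_eq_zero_of_ae h0'
  have i2 : ∫ x, |x| ∂μ = 0 := integral_eq_zero_of_ae (h0'.mono fun x hx => by simp [hx])
  unfold sigmaBar at hs
  rw [i1, i2] at hs
  simp at hs

lemma slln {Ω : Type*} [MeasurableSpace Ω] (P : Measure Ω)
    (X : ℕ → Ω → ℝ) (hXmeas : ∀ i, Measurable (X i))
    (hXindep : iIndepFun X P)
    (μ : Measure ℝ) (hXdist : ∀ i, Measure.map (X i) P = μ) (f : ℝ → ℝ) (hf : Measurable f)
    (hint : Integrable f μ) :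
    ∀ᵐ ω ∂P, Tendsto (fun n : ℕ => (∑ i ∈ Finset.range n, f (X i ω)) / n) atTop
      (𝓝 (∫ x, f x ∂μ)) := by
  have h := strong_law_ae_real (μ := P) (fun i ω => f (X i ω))
    (by
      have := hint
      rw [← hXdist 0] at this
      exact this.comp_measurable (hXmeas 0))
    (fun i j hij => (hXindep.indepFun hij).comp hf hf)
    (fun i => IdentDistrib.comp
      ⟨(hXmeas i).aemeasurable, (hXmeas 0).aemeasurable, by rw [hXdist, hXdist]⟩ hf)
  have e : ∫ ω, f (X 0 ω) ∂P = ∫ x, f x ∂μ := by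
    rw [← hXdist 0, integral_map (hXmeas 0).aemeasurable hf.aestronglyMeasurable]
  rw [e] at h
  exact h

/-- if `A_n(h)/n → a ∈ (0,ς)` almost surely, then almost surely
`Λ_n(h,A_n(h)) → λ̂(a)` (the unique `λ ≥ 0` with `G'(λ) = a`) and
`M*_n(h,A_n(h))/n → G*(a)`.  Here `Lam n hs` is the inverse of `M'_n(hs,·)` on
`[0, Σ_n(hs))`. -/
theorem stmt18 {Ω : Type*} [MeasurableSpace Ω] (P : Measure Ω) [IsProbabilityMeasure P]
    (X : ℕ → Ω → ℝ) (hXmeas : ∀ i, Measurable (X i))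
    (hXindep : iIndepFun X P)
    (μ : Measure ℝ) (hXdist : ∀ i, Measure.map (X i) P = μ)
    (hAss : Assumption1 μ) (m : ℝ) (hm : m ∈ Set.Ioo (-1 : ℝ) 1)
    (a : ℝ) (ha : a ∈ Set.Ioo 0 (sigmaBar μ m))
    (A : ℕ → (ℕ → ℝ) → ℝ) (hAmeas : ∀ n, Measurable (A n))
    (hAconv : ∀ᵐ ω ∂P,
      Tendsto (fun n => A n (fun i => X i ω) / n) atTop (nhds a))
    (Lam : ℕ → (ℕ → ℝ) → ℝ → ℝ)
    (hLam : ∀ n hs, ∀ b ∈ Set.Ico 0 (SigmaN m n hs),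
      0 ≤ Lam n hs b ∧ deriv (Mn m n hs) (Lam n hs b) = b)
    (lamHat : ℝ) (hlamHat : 0 ≤ lamHat) (hlamHatEq : deriv (Gf μ m) lamHat = a) :
    ∀ᵐ ω ∂P,
      Tendsto (fun n => Lam n (fun i => X i ω) (A n (fun i => X i ω))) atTop
        (nhds lamHat) ∧
      Tendsto (fun n => MstarN m n (fun i => X i ω) (A n (fun i => X i ω)) / n) atTop
        (nhds (Gstar μ m a)) := by
  have hμ := hAss.intAbs
  have hμ1 : Integrable (fun x : ℝ => x) μ := by
    exact (integrable_norm_iff (f := fun x : ℝ => x) measurable_id.aestronglyMeasurable).1 hμ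
  have hs : 0 < sigmaBar μ m := ha.1.trans ha.2
  have hD : ∫ x, gder m (lamHat * x) * x ∂μ = a := by
    rw [← hlamHatEq, (Gf_hasDerivAt hm hμ lamHat).deriv]
  have s1 := slln P X hXmeas hXindep μ hXdist (fun x => x) measurable_id hμ1
  have s2 := slln P X hXmeas hXindep μ hXdist (fun x => |x|) (by fun_prop) hμ
  have s3 := slln P X hXmeas hXindep μ hXdist (fun x => gfun m (lamHat * x))
    ((gfun_measurable m).comp (measurable_const_mul _)) (gfun_integrable hm hμ _)
  have s4 : ∀ᵐ ω ∂P, ∀ q : ℚ, Tendsto (fun n : ℕ =>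
      (∑ i ∈ Finset.range n, gder m ((q : ℝ) * X i ω) * X i ω) / n) atTop
      (𝓝 (∫ x, gder m ((q : ℝ) * x) * x ∂μ)) := by
    rw [ae_all_iff]
    intro q
    exact slln P X hXmeas hXindep μ hXdist (fun x => gder m ((q : ℝ) * x) * x)
      (((gder_measurable m).comp (measurable_const_mul _)).mul measurable_id)
      (gder_integrable hm hμ _)
  filter_upwards [hAconv, s1, s2, s3, s4] with ω hA h1 h2 h3 h4
  set hv : ℕ → ℝ := fun i => X i ω with hhv
  have hn : ∀ᶠ n : ℕ in atTop, (0 : ℝ) < n := by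
    filter_upwards [eventually_gt_atTop 0] with n hn
    exact_mod_cast hn
  have hSig : Tendsto (fun n : ℕ => SigmaN m n hv / n) atTop (𝓝 (sigmaBar μ m)) := by
    refine ((h1.const_mul (-m)).add h2).congr fun n => ?_
    unfold SigmaN
    ring
  have hmem : ∀ᶠ n : ℕ in atTop, A n hv ∈ Set.Ico 0 (SigmaN m n hv) := by
    filter_upwards [hn, hA.eventually (lt_mem_nhds ha.1), hA.eventually_lt hSig ha.2]
      with n hn h5 h6
    refine ⟨?_, ?_⟩
    · exact ((div_pos_iff_of_pos_right hn).1 h5).le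
    · exact (div_lt_div_iff_of_pos_right hn).1 h6
  have hL : ∀ᶠ n : ℕ in atTop,
      ∑ i ∈ Finset.range n, gder m (Lam n hv (A n hv) * hv i) * hv i = A n hv := by
    filter_upwards [hmem] with n h5
    rw [← (Mn_hasDerivAt hm n hv _).deriv]
    exact (hLam n hv _ h5).2
  have hmono : ∀ n {l k : ℝ}, l ≤ k → ∑ i ∈ Finset.range n, gder m (l * hv i) * hv i
      ≤ ∑ i ∈ Finset.range n, gder m (k * hv i) * hv i := fun n l k hlk =>
    Finset.sum_le_sum fun i _ => mono_mul hm _ hlk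
  have hLim : Tendsto (fun n => Lam n hv (A n hv)) atTop (nhds lamHat) := by
    rw [tendsto_order]
    constructor
    · intro b hb
      obtain ⟨q, hq1, hq2⟩ := exists_rat_btwn hb
      have hlt : ∫ x, gder m ((q : ℝ) * x) * x ∂μ < a := hD ▸ D_strictMono hm hμ hs hq2
      filter_upwards [hn, hL, (h4 q).eventually_lt hA hlt] with n hn h5 h6
      refine hq1.trans (lt_of_not_ge fun hc => ?_)
      have h7 := (div_lt_div_iff_of_pos_right hn).1 h6
      rw [← h5] at h7
      exact absurd h7 (not_lt.2 (hmono n hc))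
    · intro b hb
      obtain ⟨q, hq1, hq2⟩ := exists_rat_btwn hb
      have hlt : a < ∫ x, gder m ((q : ℝ) * x) * x ∂μ := by
        have := D_strictMono hm hμ hs hq1
        rwa [hD] at this
      filter_upwards [hn, hL, hA.eventually_lt (h4 q) hlt] with n hn h5 h6
      refine lt_trans (lt_of_not_ge fun hc => ?_) hq2
      have h7 := (div_lt_div_iff_of_pos_right hn).1 h6
      rw [← h5] at h7
      exact absurd h7 (not_lt.2 (hmono n hc))
  refine ⟨hLim, ?_⟩
  rw [Gstar_eq hm hμ lamHat a hD]
  have hdiff : Tendsto (fun n : ℕ =>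
      (Mn m n hv (Lam n hv (A n hv)) - Mn m n hv lamHat) / n) atTop (𝓝 0) := by
    have hz : Tendsto (fun n : ℕ => 2 * ((∑ i ∈ Finset.range n, |hv i|) / n)
        * |Lam n hv (A n hv) - lamHat|) atTop (𝓝 0) := by
      have := (h2.const_mul 2).mul (hLim.sub_const lamHat).abs
      simpa using this
    refine squeeze_zero_norm (fun n => ?_) hz
    rw [Real.norm_eq_abs, abs_div, Nat.abs_cast]
    refine (div_le_div_of_nonneg_right (Mn_lip hm n hv _ _) (Nat.cast_nonneg n)).trans
      (le_of_eq ?_)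
    ring
  have hfin := (hLim.mul hA).sub (hdiff.add h3)
  rw [zero_add] at hfin
  refine hfin.congr' ?_
  filter_upwards [hL] with n h5
  rw [MstarN_eq hm n hv _ _ h5]
  unfold Mn
  simp only [hhv]
  ring
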